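/- Let k ≥ 1 be an integer and set γ = 10⁻², η = 5·10⁻⁵. Let f : Finset E → ℝ be normalized, non-negative, monotone, submodular. Let O, D, S be finsets and OPT ≥ 0 a real with f(O) = OPT, |D| ≤ η·k and f(D) ≥ (1−γ)/2 · OPT. Let O_R ⊆ O satisfy |O_R| ≤ 0.15·k and f(O_R|D) ≥ 0.05 · f(O|D). Assume f(e|S) ≤ 100·OPT/k for every e ∈ D, and f(e|S) ≤ OPT/(10k) for every e ∈ O_R. Then f(S) ≥ 0.50025 · OPT. -/

import Mathlib

open Finset

/-!
By submodularity, adding `D` and then `T = O_R` to `S` gains at most the sum of the marginal values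
over `S` of the added elements. These values are bounded because `S` is not full, while `D` and `T`
are small, so `f (T ∪ D)` exceeds `f S` by little. On the other hand, `f (T ∪ D)` is at least the
convex combination `(1 - δ) * f D + δ * f (O ∪ D)`, where `δ` is the fraction of the gain `f(O|D)`
that `T` retains; this is large because `D` is dense. For the constants of the algorithm the
resulting factor is `(0.95 * 0.495 + 0.05) - (0.005 + 0.015) = 0.50025`.
-/

/-- A set function is submodular if its marginal values are decreasing in the base set. Only
elements outside the larger set are tested: for `e ∈ Y \ X` the inequality would force
`f X ≤ f (insert e X)`, which a non-monotone submodular function may violate. -/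
def IsSubmodular {E M : Type*} [DecidableEq E] [Sub M] [LE M] (f : Finset E → M) : Prop :=
  ∀ X Y : Finset E, X ⊆ Y → ∀ e ∉ Y, f (insert e Y) - f Y ≤ f (insert e X) - f X

namespace IsSubmodular

variable {E : Type*} [DecidableEq E]

section OrderedGroup

variable {M : Type*} [AddCommGroup M] [PartialOrder M] [IsOrderedAddMonoid M] {f : Finset E → M}

lemma insert_sub_le_insert_sub (hf : IsSubmodular f) (hmono : Monotone f) {X Y : Finset E}
    (hXY : X ⊆ Y) (e : E) : f (insert e Y) - f Y ≤ f (insert e X) - f X := by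
  by_cases he : e ∈ Y
  · rw [insert_eq_of_mem he, sub_self]
    exact sub_nonneg.2 (hmono (subset_insert e X))
  · exact hf X Y hXY e he

lemma union_sub_le_sum (hf : IsSubmodular f) (hmono : Monotone f) {S A : Finset E} (hSA : S ⊆ A)
    (T : Finset E) : f (A ∪ T) - f A ≤ ∑ e ∈ T, (f (insert e S) - f S) := by
  induction T using Finset.induction_on with
  | empty => simp
  | insert e T he ih =>
    rw [sum_insert he, union_insert]
    calc f (insert e (A ∪ T)) - f A
        = (f (insert e (A ∪ T)) - f (A ∪ T)) + (f (A ∪ T) - f A) := by abel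
      _ ≤ (f (insert e S) - f S) + ∑ e ∈ T, (f (insert e S) - f S) :=
          add_le_add (hf.insert_sub_le_insert_sub hmono (hSA.trans subset_union_left) e) ih

end OrderedGroup

variable {𝕜 : Type*} [Field 𝕜] [LinearOrder 𝕜] [IsStrictOrderedRing 𝕜] {f : Finset E → 𝕜}

lemma union_le_add_mul_of_card_le (hf : IsSubmodular f) (hmono : Monotone f) {S A T : Finset E}
    (hSA : S ⊆ A) {k ρ v : 𝕜} (hk : 0 < k) (hv : 0 ≤ v) (hcard : (#T : 𝕜) ≤ ρ * k)
    (hT : ∀ e ∈ T, f (insert e S) - f S ≤ v / k) : f (A ∪ T) ≤ f A + ρ * v := by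
  rw [← sub_le_iff_le_add']
  calc f (A ∪ T) - f A
      ≤ ∑ e ∈ T, (f (insert e S) - f S) := hf.union_sub_le_sum hmono hSA T
    _ ≤ #T * (v / k) := by simpa only [nsmul_eq_mul] using sum_le_card_nsmul T _ _ hT
    _ ≤ ρ * k * (v / k) := by gcongr
    _ = ρ * v := by field_simp

end IsSubmodular

theorem stmt_12_general {E 𝕜 : Type*} [DecidableEq E] [Field 𝕜] [LinearOrder 𝕜]
    [IsStrictOrderedRing 𝕜] {f : Finset E → 𝕜} (hf : IsSubmodular f) (hmono : Monotone f)
    {O D S T : Finset E} {k c δ η ρ α β : 𝕜} (hk : 0 < k) (hδ₀ : 0 ≤ δ) (hδ₁ : δ ≤ 1)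
    (hα : 0 ≤ α) (hβ : 0 ≤ β) (hO : 0 ≤ f O)
    (hDcard : (#D : 𝕜) ≤ η * k) (hTcard : (#T : 𝕜) ≤ ρ * k)
    (hDval : c * f O ≤ f D) (hTval : δ * (f (O ∪ D) - f D) ≤ f (T ∪ D) - f D)
    (hD : ∀ e ∈ D, f (insert e S) - f S ≤ α * f O / k)
    (hT : ∀ e ∈ T, f (insert e S) - f S ≤ β * f O / k) :
    ((1 - δ) * c + δ - (η * α + ρ * β)) * f O ≤ f S := by
  have lower : ((1 - δ) * c + δ) * f O ≤ f (T ∪ D) :=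
    calc ((1 - δ) * c + δ) * f O
        = (1 - δ) * (c * f O) + δ * f O := by ring
      _ ≤ (1 - δ) * f D + δ * f (O ∪ D) := by
          have := sub_nonneg.2 hδ₁
          gcongr
          exact hmono subset_union_left
      _ ≤ f (T ∪ D) := by linarith
  have upper : f (T ∪ D) ≤ f S + (η * α + ρ * β) * f O :=
    calc f (T ∪ D)
        ≤ f (S ∪ D ∪ T) := hmono (by grind)
      _ ≤ f (S ∪ D) + ρ * (β * f O) :=
          hf.union_le_add_mul_of_card_le hmono subset_union_left hk (by positivity) hTcard hT
      _ ≤ f S + η * (α * f O) + ρ * (β * f O) := by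
          gcongr
          exact hf.union_le_add_mul_of_card_le hmono Subset.rfl hk (by positivity) hDcard hD
      _ = f S + (η * α + ρ * β) * f O := by ring
  linarith

/-- The |S| < k case of the dense-instance algorithm analysis. -/
theorem stmt_12 {E : Type*} [DecidableEq E]
    (k : ℕ) (hk : 1 ≤ k)
    (γ η : ℝ) (hγ : γ = 1e-2) (hη : η = 5e-5)
    (f : Finset E → ℝ)
    (hnorm : f ∅ = 0)
    (hnonneg : ∀ X : Finset E, 0 ≤ f X)
    (hmono : ∀ X Y : Finset E, X ⊆ Y → f X ≤ f Y)
    (hsubmod : ∀ X Y : Finset E, X ⊆ Y → ∀ e ∉ Y,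
      f (insert e Y) - f Y ≤ f (insert e X) - f X)
    (O D S O_R : Finset E) (OPT : ℝ) (hOPT0 : 0 ≤ OPT)
    (hOPT : f O = OPT)
    (hDcard : (D.card : ℝ) ≤ η * k)
    (hDval : f D ≥ (1 - γ) / 2 * OPT)
    (hORsub : O_R ⊆ O)
    (hORcard : (O_R.card : ℝ) ≤ 0.15 * k)
    (hORval : f (O_R ∪ D) - f D ≥ 0.05 * (f (O ∪ D) - f D))
    (hD : ∀ e ∈ D, f (insert e S) - f S ≤ 100 * OPT / k)
    (hOR : ∀ e ∈ O_R, f (insert e S) - f S ≤ OPT / (10 * k)) :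
    f S ≥ 0.50025 * OPT := by
  subst hγ hη hOPT
  have hOR' : ∀ e ∈ O_R, f (insert e S) - f S ≤ 0.1 * f O / k := fun e he ↦
    (hOR e he).trans_eq (by ring)
  calc f S
      ≥ ((1 - 0.05) * ((1 - 1e-2) / 2) + 0.05 - (5e-5 * 100 + 0.15 * 0.1)) * f O :=
        stmt_12_general hsubmod hmono (by exact_mod_cast hk) (by norm_num) (by norm_num)
          (by norm_num) (by norm_num) hOPT0 hDcard hORcard hDval hORval hD hOR'
    _ = 0.50025 * f O := by ring
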